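/- arXiv:2311.07009 — 2 statements merged into one kernel-verified Lean document; each statement's English description precedes it below -/
import Mathlib

section
/- For every non-dyadic source (some probability is not an integer power of 1/2), every Huffman code strictly competitively dominates every Shannon–Fano code: the probability of symbols where the Huffman codeword is strictly shorter than the Shannon–Fano codeword exceeds the probability of symbols where it is strictly longer. Conversely, for dyadic sources the two codes are length equivalent and the competitive advantage is zero. -/
theorem kraft_mult {n : ℕ} (l : Fin n → ℕ) (g : ℕ) (S : Finset (Fin n)) (h : ∀ i ∈ S, l i ≤ g) :
    ∃ k : ℕ, ∑ i ∈ S, ((1:ℝ)/2) ^ (l i) = k * ((1:ℝ)/2) ^ g := by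
  refine ⟨∑ i ∈ S, 2 ^ (g - l i), ?_⟩
  push_cast
  rw [Finset.sum_mul]
  refine Finset.sum_congr rfl fun i hi => ?_
  have := h i hi
  obtain ⟨d, hd⟩ := Nat.exists_eq_add_of_le this
  rw [hd, Nat.add_sub_cancel_left, pow_add, mul_comm, mul_assoc, ← mul_pow]
  norm_num

theorem half_mult {c g : ℕ} (h : c ≤ g) : ∃ k : ℕ, ((1:ℝ)/2) ^ c = k * ((1:ℝ)/2) ^ g := by
  refine ⟨2 ^ (g - c), ?_⟩
  obtain ⟨d, rfl⟩ := Nat.exists_eq_add_of_le h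
  push_cast
  rw [Nat.add_sub_cancel_left, pow_add, mul_comm, mul_assoc, ← mul_pow]
  norm_num

/-- A positive difference of multiples of `t` is at least `t`. -/
theorem gap_ge {t : ℝ} (ht : 0 < t) (k m : ℤ) (h : (m:ℝ) * t < k * t) : m * t + t ≤ k * t := by
  have h1 : (m:ℝ) < k := lt_of_mul_lt_mul_right h ht.le
  have h2 : m + 1 ≤ k := by exact_mod_cast h1
  have h3 : (m:ℝ) + 1 ≤ k := by exact_mod_cast h2
  nlinarith

theorem extract {n : ℕ} (l : Fin n → ℕ) (c : ℕ) (S : Finset (Fin n)) (hS : ∀ i ∈ S, c ≤ l i)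
    (h : ((1:ℝ)/2) ^ c ≤ ∑ i ∈ S, ((1:ℝ)/2) ^ (l i)) :
    ∃ Z ⊆ S, ∑ i ∈ Z, ((1:ℝ)/2) ^ (l i) = ((1:ℝ)/2) ^ c := by
  induction S using Finset.strongInduction with
  | H S ih =>
    rcases h.eq_or_lt with he | hlt
    · exact ⟨S, subset_rfl, he.symm⟩
    have hne : S.Nonempty := by
      by_contra hc
      rw [Finset.not_nonempty_iff_eq_empty] at hc
      subst hc
      have : (0:ℝ) < (1/2)^c := by positivity
      rw [Finset.sum_empty] at hlt
      linarith
    obtain ⟨g, hg, hmax⟩ := S.exists_max_image l hne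
    obtain ⟨k, hk⟩ := kraft_mult l (l g) S hmax
    obtain ⟨m, hm⟩ := half_mult (hS g hg)
    have hgap := gap_ge (t := (1/2)^(l g)) (by positivity) k m (by push_cast; linarith)
    push_cast at hgap
    have herase := Finset.sum_erase_add S (fun i => ((1:ℝ)/2) ^ (l i)) hg
    obtain ⟨Z, hZ, hZe⟩ := ih (S.erase g) (Finset.erase_ssubset hg)
      (fun i hi => hS i (Finset.mem_of_mem_erase hi)) (by linarith)
    exact ⟨Z, hZ.trans (Finset.erase_subset _ _), hZe⟩

theorem extend {n : ℕ} (l : Fin n → ℕ) (c : ℕ) (T : Finset (Fin n)) (hT : ∀ i ∈ T, c ≤ l i)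
    (k : ℕ) (hk : ∑ i ∈ T, ((1:ℝ)/2) ^ (l i) = k * ((1:ℝ)/2) ^ c) (hk0 : 1 ≤ k) :
    ∀ (r : ℕ) (R : Finset (Fin n)), (T \ R).card = r → R ⊆ T →
    ∑ i ∈ R, ((1:ℝ)/2) ^ (l i) ≤ ((1:ℝ)/2) ^ c →
    ∃ Z, R ⊆ Z ∧ Z ⊆ T ∧ ∑ i ∈ Z, ((1:ℝ)/2) ^ (l i) = ((1:ℝ)/2) ^ c := by
  intro r
  induction r with
  | zero =>
    intro R hr hR h
    have : T ⊆ R := by simpa [Finset.sdiff_eq_empty_iff_subset] using hr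
    have : R = T := subset_antisymm hR this
    subst this
    refine ⟨R, subset_rfl, subset_rfl, le_antisymm h ?_⟩
    rw [hk]
    have : (1:ℝ) ≤ k := by exact_mod_cast hk0
    exact le_mul_of_one_le_left (by positivity) this
  | succ r ih =>
    intro R hr hR h
    rcases h.eq_or_lt with he | hlt
    · exact ⟨R, subset_rfl, hR, he⟩
    have hne : (T \ R).Nonempty := by
      rw [← Finset.card_pos]; omega
    obtain ⟨g, hg, hmax⟩ := (T \ R).exists_max_image l hne
    obtain ⟨m, hm⟩ := kraft_mult l (l g) _ hmax
    have hgT := (Finset.mem_sdiff.1 hg).1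
    have hgR := (Finset.mem_sdiff.1 hg).2
    obtain ⟨u, hu⟩ := half_mult (hT g hgT)
    have hsd := Finset.sum_sdiff (f := fun i => ((1:ℝ)/2) ^ (l i)) hR
    have hRe : ∑ i ∈ R, ((1:ℝ)/2) ^ (l i) = ((k * u - m : ℤ):ℝ) * (1/2)^(l g) := by
      push_cast
      rw [sub_mul, mul_assoc, ← hu]
      linarith
    have hgap := gap_ge (t := (1/2)^(l g)) (by positivity) u (k*u-m)
      (by rw [← hRe]; push_cast; linarith)
    rw [← hRe] at hgap
    push_cast at hgap
    obtain ⟨Z, h1, h2, h3⟩ := ih (insert g R) (by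
        rw [Finset.sdiff_insert, Finset.card_erase_of_mem hg]; omega)
      (Finset.insert_subset hgT hR)
      (by rw [Finset.sum_insert hgR]; linarith)
    exact ⟨Z, (Finset.subset_insert _ _).trans h1, h2, h3⟩

theorem blocks {n : ℕ} (p : Fin n → ℝ) (l : Fin n → ℕ) (c : ℕ)
    (hX : ∀ X : Finset (Fin n), ∑ i ∈ X, ((1:ℝ)/2) ^ (l i) = ((1:ℝ)/2) ^ c →
      ((1:ℝ)/2) ^ c ≤ ∑ i ∈ X, p i) (hp : ∀ i, 0 < p i) :
    ∀ (k : ℕ) (T : Finset (Fin n)), (∀ i ∈ T, c ≤ l i) →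
    ∑ i ∈ T, ((1:ℝ)/2) ^ (l i) = k * ((1:ℝ)/2) ^ c →
    ∑ i ∈ T, ((1:ℝ)/2) ^ (l i) ≤ ∑ i ∈ T, p i := by
  intro k
  induction k with
  | zero =>
    intro T _ h
    rw [h]
    simpa using Finset.sum_nonneg fun i _ => (hp i).le
  | succ k ih =>
    intro T hT h
    have hpos : (0:ℝ) < (1/2)^c := by positivity
    push_cast at h
    obtain ⟨Z, hZ, hZe⟩ := extract l c T hT (by
      rw [h]; nlinarith [(Nat.cast_nonneg k : (0:ℝ) ≤ k)])
    have h1 := Finset.sum_sdiff (f := fun i => ((1:ℝ)/2) ^ (l i)) hZ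
    have h2 := Finset.sum_sdiff (f := p) hZ
    have h3 := ih (T \ Z) (fun i hi => hT i (Finset.mem_sdiff.1 hi).1) (by
      linarith)
    have h4 := hX Z hZe
    linarith

/-- The words of length at least `c` have Kraft sum a multiple of `2^{-c}`. -/
theorem tail_mult {n : ℕ} (l : Fin n → ℕ) (hcomplete : ∑ i, ((1:ℝ)/2) ^ (l i) = 1) (c : ℕ) :
    ∃ k : ℕ, ∑ i ∈ Finset.univ.filter (fun i => c ≤ l i), ((1:ℝ)/2) ^ (l i)
      = k * ((1:ℝ)/2) ^ c := by
  obtain ⟨m, hm⟩ := kraft_mult l c (Finset.univ.filter (fun i => ¬ c ≤ l i))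
    (fun i hi => by simp at hi; omega)
  obtain ⟨u, hu⟩ := half_mult (Nat.zero_le c)
  have hs := Finset.sum_filter_add_sum_filter_not Finset.univ (fun i => c ≤ l i)
    (fun i => ((1:ℝ)/2) ^ (l i))
  have hpos : (0:ℝ) < (1/2)^c := by positivity
  have hn : 0 ≤ ∑ i ∈ Finset.univ.filter (fun i => c ≤ l i), ((1:ℝ)/2) ^ (l i) :=
    Finset.sum_nonneg fun i _ => by positivity
  simp only [hcomplete] at hs
  rw [pow_zero] at hu
  have hmu : m ≤ u := by
    have : (m:ℝ) * (1/2)^c ≤ u * (1/2)^c := by linarith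
    exact_mod_cast le_of_mul_le_mul_right this hpos
  refine ⟨u - m, ?_⟩
  rw [Nat.cast_sub hmu, sub_mul]
  linarith

theorem extend_tail {n : ℕ} (l : Fin n → ℕ) (hcomplete : ∑ i, ((1:ℝ)/2) ^ (l i) = 1) (c : ℕ)
    (R : Finset (Fin n)) (hne : R.Nonempty)
    (h : ∑ i ∈ R, ((1:ℝ)/2) ^ (l i) ≤ ((1:ℝ)/2) ^ c) :
    ∃ Z, R ⊆ Z ∧ Z ⊆ Finset.univ.filter (fun i => c ≤ l i) ∧
      ∑ i ∈ Z, ((1:ℝ)/2) ^ (l i) = ((1:ℝ)/2) ^ c := by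
  obtain ⟨k, hk⟩ := tail_mult l hcomplete c
  have hsub : R ⊆ Finset.univ.filter (fun i => c ≤ l i) := by
    intro i hi
    simp only [Finset.mem_filter, Finset.mem_univ, true_and]
    have h1 := Finset.single_le_sum (f := fun i => ((1:ℝ)/2) ^ (l i))
      (fun i _ => by positivity) hi
    have h2 : ((1:ℝ)/2) ^ (l i) ≤ (1/2)^c := h1.trans h
    exact (pow_le_pow_iff_right_of_lt_one₀ (by norm_num) (by norm_num)).1 h2
  refine extend l c _ (fun i hi => by simpa using hi) k hk ?_ _ R rfl hsub h
  by_contra hk0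
  have : k = 0 := by omega
  subst this
  have := Finset.sum_pos (f := fun i => ((1:ℝ)/2) ^ (l i)) (fun i _ => by positivity)
    (hne.mono hsub)
  rw [hk] at this
  simp at this

theorem main_nondyadic (n : ℕ) (p : Fin n → ℝ)
    (hpos : ∀ i, 0 < p i) (hsum : ∑ i, p i = 1)
    (lH : Fin n → ℕ)
    (hcomplete : ∑ i, ((1:ℝ)/2) ^ (lH i) = 1)
    (hsm : ∀ (X Y : Finset (Fin n)) (a b : ℕ),
      (∑ x ∈ X, ((1:ℝ)/2) ^ (lH x)) = ((1:ℝ)/2) ^ a →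
      (∑ x ∈ Y, ((1:ℝ)/2) ^ (lH x)) = ((1:ℝ)/2) ^ b →
      a < b → ∑ x ∈ Y, p x ≤ ∑ x ∈ X, p x)
    (W L : Finset (Fin n)) (hW : ∀ i, i ∈ W ↔ p i < (1/2)^(lH i))
    (hL : ∀ i, i ∈ L → 2 * (1/2)^(lH i) ≤ p i) (hne : W.Nonempty) :
    ∑ i ∈ L, p i < ∑ i ∈ W, p i := by
  classical
  rcases L.eq_empty_or_nonempty with rfl | hLne
  · simpa using Finset.sum_pos (fun i _ => hpos i) hne
  have hlt_of_ne : ∀ {A B : Finset (Fin n)}, A ⊆ B →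
      ∑ i ∈ A, ((1:ℝ)/2) ^ (lH i) ≠ ∑ i ∈ B, ((1:ℝ)/2) ^ (lH i) →
      ∑ i ∈ A, p i < ∑ i ∈ B, p i := by
    intro A B hAB hn
    have hs : ¬ B ⊆ A := fun hBA => hn (by rw [subset_antisymm hAB hBA])
    obtain ⟨x, hxB, hxA⟩ := Finset.not_subset.1 hs
    exact Finset.sum_lt_sum_of_subset hAB hxB hxA (hpos x) fun i _ _ => (hpos i).le
  have hQWpos : 0 < ∑ i ∈ W, ((1:ℝ)/2) ^ (lH i) := Finset.sum_pos (fun i _ => by positivity) hne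
  have hQW1 : ∑ i ∈ W, ((1:ℝ)/2) ^ (lH i) ≤ 1 := by
    refine le_of_le_of_eq ?_ hcomplete
    exact Finset.sum_le_sum_of_subset_of_nonneg (Finset.subset_univ _) fun i _ _ => by positivity
  obtain ⟨N, hN⟩ : ∃ a : ℕ, ((1:ℝ)/2)^a ≤ ∑ i ∈ W, ((1:ℝ)/2) ^ (lH i) := by
    obtain ⟨a, ha⟩ := exists_pow_lt_of_lt_one hQWpos (by norm_num : (1:ℝ)/2 < 1)
    exact ⟨a, ha.le⟩
  classical
  let a := Nat.find (⟨N, hN⟩ : ∃ a : ℕ, ((1:ℝ)/2)^a ≤ ∑ i ∈ W, ((1:ℝ)/2) ^ (lH i))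
  have ha : ((1:ℝ)/2)^a ≤ ∑ i ∈ W, ((1:ℝ)/2) ^ (lH i) :=
    Nat.find_spec (⟨N, hN⟩ : ∃ a : ℕ, ((1:ℝ)/2)^a ≤ ∑ i ∈ W, ((1:ℝ)/2) ^ (lH i))
  have hWlen : ∀ i ∈ W, a ≤ lH i := by
    intro i hi
    refine Nat.find_min' _ ?_
    exact Finset.single_le_sum (f := fun i => ((1:ℝ)/2) ^ (lH i))
      (fun i _ => by positivity) hi
  clear_value a
  obtain ⟨X, hXW, hX⟩ := extract lH a W hWlen ha
  rcases lt_or_ge (∑ i ∈ L, ((1:ℝ)/2) ^ (lH i)) ((1/2)^(a+1)) with hlt | hge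
  · obtain ⟨Z, hLZ, -, hZ⟩ := extend_tail lH hcomplete (a+1) L hLne hlt.le
    calc _ < ∑ i ∈ Z, p i := hlt_of_ne hLZ (by rw [hZ]; exact hlt.ne)
      _ ≤ ∑ i ∈ X, p i := hsm X Z a (a+1) hX hZ (by omega)
      _ ≤ _ := Finset.sum_le_sum_of_subset_of_nonneg hXW fun i _ _ => (hpos i).le
  · exfalso
    obtain ⟨Y, b, hYL, hY, hba⟩ : ∃ (Y : Finset (Fin n)) (b : ℕ), Y ⊆ L ∧
        ∑ i ∈ Y, ((1:ℝ)/2) ^ (lH i) = (1/2)^b ∧ b ≤ a + 1 := by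
      by_cases hy : ∃ y ∈ L, lH y ≤ a + 1
      · obtain ⟨y, hy, hya⟩ := hy
        exact ⟨{y}, lH y, by simpa using hy, by simp, hya⟩
      · push Not at hy
        obtain ⟨Y, hY, hYe⟩ := extract lH (a+1) L (fun i hi => (hy i hi).le) hge
        exact ⟨Y, a+1, hY, hYe, le_rfl⟩
    have hPY : 2 * (1/2)^b ≤ ∑ i ∈ Y, p i := by
      rw [← hY, Finset.mul_sum]
      exact Finset.sum_le_sum fun i hi => hL i (hYL hi)
    have hYne : Y.Nonempty := by
      by_contra hc
      rw [Finset.not_nonempty_iff_eq_empty] at hc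
      subst hc
      have : (0:ℝ) < (1/2)^b := by positivity
      rw [← hY] at this
      simp at this
    have hPY1 : ∑ i ∈ Y, p i ≤ 1 := by
      rw [← hsum]
      exact Finset.sum_le_sum_of_subset_of_nonneg (Finset.subset_univ _) fun i _ _ => (hpos i).le
    obtain _ | c := b
    · norm_num at hPY; linarith
    have hc2 : 2 * ((1:ℝ)/2)^(c+1) = (1/2)^c := by ring
    have hcpos : (0:ℝ) < (1/2)^c := by positivity
    rw [hc2] at hPY
    obtain ⟨Z, hYZ, hZT, hZ⟩ := extend_tail lH hcomplete c Y hYne (by rw [hY]; linarith)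
    have hPZ : ∑ i ∈ Y, p i < ∑ i ∈ Z, p i := hlt_of_ne hYZ (by rw [hY, hZ]; linarith)
    obtain ⟨k, hk⟩ := tail_mult lH hcomplete c
    set T := Finset.univ.filter (fun i => c ≤ lH i) with hT
    have h1 := Finset.sum_sdiff (f := fun i => ((1:ℝ)/2) ^ (lH i)) hZT
    have h2 := Finset.sum_sdiff (f := p) hZT
    have hn : 0 ≤ ∑ i ∈ T \ Z, ((1:ℝ)/2) ^ (lH i) := Finset.sum_nonneg fun i _ => by positivity
    have hk1 : 1 ≤ k := by
      by_contra h0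
      have : k = 0 := by omega
      subst this
      push_cast at hk
      linarith
    have hb := blocks p lH c (fun X hX => hPY.trans (hsm X Y c (c+1) hX hY (by omega))) hpos (k-1)
      (T \ Z) (fun i hi => by simpa [hT] using (Finset.mem_sdiff.1 hi).1)
      (by rw [Nat.cast_sub hk1, sub_mul]; push_cast; linarith)
    have hrest : ∑ i ∈ Finset.univ \ T, ((1:ℝ)/2) ^ (lH i) ≤ ∑ i ∈ Finset.univ \ T, p i := by
      refine Finset.sum_le_sum fun i hi => ?_
      by_contra hcon
      have hiW := (hW i).2 (not_le.1 hcon)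
      have := hWlen i hiW
      simp [hT] at hi
      omega
    have h3 := Finset.sum_sdiff (f := fun i => ((1:ℝ)/2) ^ (lH i)) (Finset.subset_univ T)
    have h4 := Finset.sum_sdiff (f := p) (Finset.subset_univ T)
    linarith

theorem dyadic_case (n : ℕ) (p : Fin n → ℝ)
    (hpos : ∀ i, 0 < p i) (hsum : ∑ i, p i = 1)
    (lH : Fin n → ℕ)
    (hcomplete : ∑ i, ((1:ℝ)/2) ^ (lH i) = 1)
    (hopt : ∀ l' : Fin n → ℕ, (∑ i, ((1:ℝ)/2) ^ (l' i) ≤ 1) →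
      ∑ i, p i * lH i ≤ ∑ i, p i * l' i)
    (m : Fin n → ℕ) (hm : ∀ i, p i = ((1:ℝ)/2) ^ (m i)) : ∀ i, lH i = m i := by
  have h := hopt m (by simp only [← hm]; exact hsum.le)
  have hq : ∀ i, ((1:ℝ)/2)^(lH i) = p i * Real.exp (Real.log 2 * ((m i:ℝ) - lH i)) := by
    intro i
    have e : (1:ℝ)/2 = Real.exp (-Real.log 2) := by
      rw [Real.exp_neg, Real.exp_log (by norm_num)]; norm_num
    rw [hm, e, ← Real.exp_nat_mul, ← Real.exp_nat_mul, ← Real.exp_add]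
    congr 1; ring
  have hlog : 0 < Real.log 2 := Real.log_pos (by norm_num)
  by_contra! hcon
  obtain ⟨j, hj⟩ := hcon
  have hlt : ∑ i, p i * (Real.log 2 * ((m i:ℝ) - lH i) + 1) < ∑ i, ((1:ℝ)/2)^(lH i) := by
    refine Finset.sum_lt_sum (fun i _ => ?_) ⟨j, Finset.mem_univ _, ?_⟩
    · rw [hq]
      exact mul_le_mul_of_nonneg_left (Real.add_one_le_exp _) (hpos i).le
    · rw [hq]
      refine mul_lt_mul_of_pos_left (Real.add_one_lt_exp ?_) (hpos j)
      refine mul_ne_zero hlog.ne' (sub_ne_zero.2 ?_)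
      exact_mod_cast hj.symm
  have he : ∑ i, p i * (Real.log 2 * ((m i:ℝ) - lH i) + 1)
      = Real.log 2 * (∑ i, p i * m i - ∑ i, p i * lH i) + ∑ i, p i := by
    rw [← Finset.sum_sub_distrib, Finset.mul_sum, ← Finset.sum_add_distrib]
    exact Finset.sum_congr rfl fun i _ => by ring
  rw [he, hsum, hcomplete] at hlt
  nlinarith


/-- A Huffman code (complete, strongly monotone, expected-length optimal)
strictly competitively dominates the Shannon–Fano code (lengths
⌈log₂(1/p)⌉) if and only if the source is not dyadic; moreover for dyadic
sources the two codes are length equivalent. -/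
theorem huffman_dominates_shannon_fano (n : ℕ) (p : Fin n → ℝ)
    (hpos : ∀ i, 0 < p i) (hsum : ∑ i, p i = 1)
    (lH : Fin n → ℕ)
    (hcomplete : ∑ i, ((1:ℝ)/2) ^ (lH i) = 1)
    (hsm : ∀ (X Y : Finset (Fin n)) (a b : ℕ),
      (∑ x ∈ X, ((1:ℝ)/2) ^ (lH x)) = ((1:ℝ)/2) ^ a →
      (∑ x ∈ Y, ((1:ℝ)/2) ^ (lH x)) = ((1:ℝ)/2) ^ b →
      a < b → ∑ x ∈ Y, p x ≤ ∑ x ∈ X, p x)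
    (hopt : ∀ l' : Fin n → ℕ, (∑ i, ((1:ℝ)/2) ^ (l' i) ≤ 1) →
      ∑ i, p i * lH i ≤ ∑ i, p i * l' i) :
    (((∑ i ∈ Finset.univ.filter
          (fun i => (lH i : ℤ) < ⌈Real.logb 2 (1 / p i)⌉), p i)
      > ∑ i ∈ Finset.univ.filter
          (fun i => ⌈Real.logb 2 (1 / p i)⌉ < (lH i : ℤ)), p i)
      ↔ ¬ (∀ i, ∃ m : ℕ, p i = ((1:ℝ)/2) ^ m)) ∧
    ((∀ i, ∃ m : ℕ, p i = ((1:ℝ)/2) ^ m) →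
      ∀ i, (lH i : ℤ) = ⌈Real.logb 2 (1 / p i)⌉) := by
  have hceil : ∀ i (l : ℕ), (l : ℤ) < ⌈Real.logb 2 (1 / p i)⌉ ↔ p i < (1/2)^l := by
    intro i l
    have hp := hpos i
    rw [Int.lt_ceil, Int.cast_natCast, Real.lt_logb_iff_rpow_lt (by norm_num) (by positivity),
      Real.rpow_natCast, one_div_pow, lt_one_div (by positivity) hp]
  have hdy : (∀ i, ∃ m : ℕ, p i = ((1:ℝ)/2) ^ m) →
      ∀ i, (lH i : ℤ) = ⌈Real.logb 2 (1 / p i)⌉ := by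
    intro hd
    choose m hm using hd
    have hl := dyadic_case n p hpos hsum lH hcomplete hopt m hm
    intro i
    rw [hl i, hm i, one_div_pow, one_div_one_div, ← Real.rpow_natCast,
      Real.logb_rpow (by norm_num) (by norm_num), Int.ceil_natCast]
  refine ⟨⟨?_, ?_⟩, hdy⟩
  · intro hgt hd
    have := hdy hd
    simp only [← this, lt_irrefl, gt_iff_lt] at hgt
  · intro hnd
    refine main_nondyadic n p hpos hsum lH hcomplete hsm _ _ (fun i => ?_) (fun i hi => ?_) ?_
    · simp only [Finset.mem_filter, Finset.mem_univ, true_and]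
      exact hceil i _
    · simp only [Finset.mem_filter, Finset.mem_univ, true_and] at hi
      rcases hl : lH i with _ | c
      · exfalso
        rw [hl] at hi
        have h1 : p i ≤ 1 := by
          rw [← hsum]
          exact Finset.single_le_sum (fun i _ => (hpos i).le) (Finset.mem_univ i)
        have h2 : 0 ≤ Real.logb 2 (1 / p i) :=
          Real.logb_nonneg (by norm_num) (by rw [le_div_iff₀ (hpos i)]; linarith)
        have h3 := Int.ceil_nonneg h2
        simp at hi h3
        omega
      · have : ¬ ((c : ℤ) < ⌈Real.logb 2 (1 / p i)⌉) := by
          rw [hl] at hi; push_cast at hi; omega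
        rw [hceil] at this
        rw [pow_succ]
        linarith
    · by_contra hc
      rw [Finset.not_nonempty_iff_eq_empty] at hc
      apply hnd
      have hle : ∀ i ∈ Finset.univ, ((1:ℝ)/2)^(lH i) ≤ p i := by
        intro i _
        by_contra hcon
        have : i ∈ Finset.univ.filter (fun i => (lH i : ℤ) < ⌈Real.logb 2 (1 / p i)⌉) := by
          simp only [Finset.mem_filter, Finset.mem_univ, true_and]
          exact (hceil i _).2 (not_le.1 hcon)
        rw [hc] at this
        simp at this
      have := (Finset.sum_eq_sum_iff_of_le hle).1 (by rw [hcomplete, hsum])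
      exact fun i => ⟨lH i, (this i (Finset.mem_univ i)).symm⟩
end

section
/- For any source and any Huffman code H, the competitive advantage of any prefix code C over H is strictly less than 1/3; that is, P({x : l_C(x) < l_H(x)}) − P({x : l_C(x) > l_H(x)}) < 1/3. -/
namespace HuffAdv

variable {ι : Type*} [DecidableEq ι]

/-- Integer Kraft weight. -/
def kr (e : ι → ℕ) (A : Finset ι) : ℕ := ∑ x ∈ A, 2 ^ e x

lemma kr_mono (e : ι → ℕ) {A B : Finset ι} (h : A ⊆ B) : kr e A ≤ kr e B :=
  Finset.sum_le_sum_of_subset h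

lemma kr_sdiff (e : ι → ℕ) {A B : Finset ι} (h : A ⊆ B) : kr e (B \ A) + kr e A = kr e B :=
  Finset.sum_sdiff h

lemma kr_union (e : ι → ℕ) {A B : Finset ι} (h : Disjoint A B) :
    kr e (A ∪ B) = kr e A + kr e B :=
  Finset.sum_union h

lemma le_kr (e : ι → ℕ) {A : Finset ι} {x : ι} (h : x ∈ A) : 2 ^ e x ≤ kr e A :=
  Finset.single_le_sum (f := fun x => 2 ^ e x) (fun _ _ => Nat.zero_le _) h

lemma kr_pos (e : ι → ℕ) {A : Finset ι} (h : A.Nonempty) : 0 < kr e A := by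
  obtain ⟨x, hx⟩ := h
  exact lt_of_lt_of_le (by positivity) (le_kr e hx)

lemma nonempty_of_kr (e : ι → ℕ) {A : Finset ι} (h : 0 < kr e A) : A.Nonempty := by
  by_contra hh
  rw [Finset.not_nonempty_iff_eq_empty] at hh
  subst hh
  simp [kr] at h

lemma exists_sub (e : ι → ℕ) (θ : ℕ) (A : Finset ι) (h1 : θ ≤ kr e A)
    (h2 : ∀ x ∈ A, 2 ^ e x ∣ θ) : ∃ B ⊆ A, kr e B = θ := by
  induction A using Finset.strongInduction with
  | H A ih =>
    rcases eq_or_lt_of_le h1 with h | h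
    · exact ⟨A, subset_rfl, h.symm⟩
    · have hne : A.Nonempty := nonempty_of_kr e (by omega)
      obtain ⟨x, hx, hmin⟩ := Finset.exists_min_image A e hne
      have hd : 2 ^ e x ∣ kr e A :=
        Finset.dvd_sum (fun y hy => pow_dvd_pow 2 (hmin y hy))
      have hd2 : 2 ^ e x ∣ kr e A - θ := Nat.dvd_sub hd (h2 x hx)
      have hle : 2 ^ e x ≤ kr e A - θ := Nat.le_of_dvd (by omega) hd2
      have hs : kr e (A.erase x) + 2 ^ e x = kr e A :=
        Finset.sum_erase_add A (fun x => 2 ^ e x) hx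
      obtain ⟨B, hB, hB2⟩ := ih (A.erase x) (Finset.erase_ssubset hx) (by omega)
        (fun y hy => h2 y (Finset.mem_of_mem_erase hy))
      exact ⟨B, hB.trans (Finset.erase_subset _ _), hB2⟩

lemma exists_sub_pow (e : ι → ℕ) (j : ℕ) (A : Finset ι) (h1 : 2 ^ j ≤ kr e A)
    (h2 : ∀ x ∈ A, e x ≤ j) : ∃ B ⊆ A, kr e B = 2 ^ j :=
  exists_sub e _ A h1 (fun x hx => pow_dvd_pow 2 (h2 x hx))

/-- Items of a set of weight `< 2^(j+1)` have exponent `≤ j`. -/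
lemma exp_le (e : ι → ℕ) {j : ℕ} {A : Finset ι} (h : kr e A < 2 ^ (j + 1)) :
    ∀ x ∈ A, e x ≤ j := by
  intro x hx
  have := (Nat.pow_lt_pow_iff_right (a := 2) (by norm_num)).1 (lt_of_le_of_lt (le_kr e hx) h)
  omega

lemma exists_ext (e : ι → ℕ) {j s : ℕ} {A T : Finset ι} (hA : A ⊆ T) (hne : A.Nonempty)
    (hk : kr e A ≤ 2 ^ j) (hT : kr e T = 2 ^ s) (hjs : j ≤ s) :
    ∃ B, A ⊆ B ∧ B ⊆ T ∧ kr e B = 2 ^ j := by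
  set S := T.filter (fun x => e x ≤ j) with hS
  have hST : S ⊆ T := Finset.filter_subset _ _
  have hAS : A ⊆ S := by
    intro x hx
    rw [hS, Finset.mem_filter]
    refine ⟨hA hx, ?_⟩
    exact (Nat.pow_le_pow_iff_right (a := 2) (by norm_num)).1 ((le_kr e hx).trans hk)
  have hdvd1 : 2 ^ j ∣ kr e (T \ S) := by
    refine Finset.dvd_sum (fun y hy => pow_dvd_pow 2 ?_)
    simp [hS] at hy
    have := hy.2 hy.1
    omega
  have hsum := kr_sdiff e hST
  have hdvd : 2 ^ j ∣ kr e S := by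
    rw [← Nat.dvd_add_right hdvd1, hsum, hT]
    exact pow_dvd_pow 2 hjs
  have hpos : 0 < kr e S := kr_pos e (hne.mono hAS)
  have hle : 2 ^ j ≤ kr e S := Nat.le_of_dvd hpos hdvd
  have hsum2 := kr_sdiff e hAS
  obtain ⟨B, hB, hBk⟩ := exists_sub e (kr e S - 2 ^ j) (S \ A) (by omega) (by
    intro x hx
    have hxS : x ∈ S := (Finset.mem_sdiff.1 hx).1
    have : e x ≤ j := (Finset.mem_filter.1 hxS).2
    exact (pow_dvd_pow 2 this).trans (Nat.dvd_sub hdvd dvd_rfl))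
  have hBS : B ⊆ S := hB.trans Finset.sdiff_subset
  refine ⟨S \ B, ?_, Finset.sdiff_subset.trans hST, ?_⟩
  · intro x hx
    rw [Finset.mem_sdiff]
    refine ⟨hAS hx, fun hxB => ?_⟩
    exact (Finset.mem_sdiff.1 (hB hxB)).2 hx
  · have := kr_sdiff e hBS
    omega

/-- Halving a block that has a nonempty proper subset. -/
lemma exists_half (e : ι → ℕ) {s : ℕ} {A B : Finset ι} (hAB : A ⊆ B) (hne : A.Nonempty)
    (hlt : kr e A < kr e B) (hB : kr e B = 2 ^ (s + 1)) :
    ∃ C ⊆ B, kr e C = 2 ^ s ∧ kr e (B \ C) = 2 ^ s := by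
  have h2 : ∀ x ∈ B, e x ≤ s := by
    intro x hx
    have : 2 ^ e x < 2 ^ (s + 1) := by
      rw [← hB]
      by_cases hxA : x ∈ A
      · exact lt_of_le_of_lt (le_kr e hxA) hlt
      · have h1 := kr_sdiff e hAB
        have h2 := le_kr e (Finset.mem_sdiff.2 ⟨hx, hxA⟩)
        have h3 := kr_pos e hne
        omega
    have := (Nat.pow_lt_pow_iff_right (a := 2) (by norm_num)).1 this
    omega
  obtain ⟨C, hC, hCk⟩ := exists_sub_pow e s B (by rw [hB]; exact Nat.pow_le_pow_right (by norm_num) (by omega)) h2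
  refine ⟨C, hC, hCk, ?_⟩
  have := kr_sdiff e hC
  rw [pow_succ] at hB
  omega

/-- Probability of a set. -/
def pr (p : ι → ℝ) (A : Finset ι) : ℝ := ∑ x ∈ A, p x

lemma pr_sdiff (p : ι → ℝ) {A B : Finset ι} (h : A ⊆ B) : pr p (B \ A) + pr p A = pr p B :=
  Finset.sum_sdiff h

lemma pr_union (p : ι → ℝ) {A B : Finset ι} (h : Disjoint A B) :
    pr p (A ∪ B) = pr p A + pr p B :=
  Finset.sum_union h

lemma pr_nonneg {p : ι → ℝ} (hp : ∀ i, 0 < p i) (A : Finset ι) : 0 ≤ pr p A :=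
  Finset.sum_nonneg (fun i _ => (hp i).le)

lemma pr_pos {p : ι → ℝ} (hp : ∀ i, 0 < p i) {A : Finset ι} (h : A.Nonempty) : 0 < pr p A :=
  Finset.sum_pos (fun i _ => hp i) h

lemma pr_mono {p : ι → ℝ} (hp : ∀ i, 0 < p i) {A B : Finset ι} (h : A ⊆ B) :
    pr p A ≤ pr p B := by
  have := pr_sdiff p h
  have := pr_nonneg hp (B \ A)
  linarith

/-- Strong monotonicity, in terms of integer weights. -/
def SM (e : ι → ℕ) (p : ι → ℝ) : Prop :=
  ∀ (X Y : Finset ι) (a b : ℕ), kr e X = 2 ^ a → kr e Y = 2 ^ b → b < a → pr p Y ≤ pr p X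

lemma lt_two_mul {e : ι → ℕ} {p : ι → ℝ} (hp : ∀ i, 0 < p i) (hsm : SM e p)
    {j s : ℕ} {T U V : Finset ι} (hT : kr e T = 2 ^ s) (hjs : j ≤ s) (hU : U ⊆ T)
    (hne : U.Nonempty) (hUj : kr e U < 2 ^ j) (hVj : 2 ^ j ≤ kr e V) (hVe : ∀ x ∈ V, e x ≤ j) :
    pr p U < 2 * pr p V := by
  obtain ⟨A, hUA, hAT, hA⟩ := exists_ext e hU hne hUj.le hT hjs
  have hUpos := kr_pos e hne
  have hj : j ≠ 0 := by
    rintro rfl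
    simp at hUj
    omega
  obtain ⟨i, rfl⟩ := Nat.exists_eq_succ_of_ne_zero hj
  obtain ⟨C, hC, hC1, hC2⟩ := exists_half e hUA hne (by omega) hA
  obtain ⟨v, hv, hvk⟩ := exists_sub_pow e _ V hVj hVe
  have h1 := hsm v C _ _ hvk hC1 (by omega)
  have h2 := hsm v (A \ C) _ _ hvk hC2 (by omega)
  have h3 := pr_sdiff p hC
  have h4 := pr_sdiff p hUA
  have h5 := pr_mono hp hv
  have h6 : 0 < pr p (A \ U) := pr_pos hp (nonempty_of_kr e (by
    have := kr_sdiff e hUA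
    omega))
  linarith

theorem key {e : ι → ℕ} {p : ι → ℝ} (hp : ∀ i, 0 < p i) (hsm : SM e p) (T : Finset ι) :
    (∀ (s : ℕ) (U V : Finset ι), kr e T = 2 ^ s → U ⊆ T → V ⊆ T → Disjoint U V →
      kr e U < kr e V → 3 * pr p U < 3 * pr p V + pr p T) ∧
    (∀ (s : ℕ) (w : ℝ) (U V : Finset ι), kr e T = 2 ^ (s + 2) → U ⊆ T → V ⊆ T → Disjoint U V →
      kr e U < kr e V → kr e V < 2 ^ (s + 1) → 0 ≤ w →
      (∀ A ⊆ T, kr e A = 2 ^ s → pr p A ≤ w) →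
      ∃ Z ⊆ T, kr e Z = 2 ^ (s + 1) ∧ 3 * pr p U + 2 * pr p Z < 2 * w + 3 * pr p V + pr p T) := by
  induction T using Finset.strongInduction with
  | H T ih =>
  constructor
  · intro s U V hT hU hV hd hlt
    have hVne : V.Nonempty := nonempty_of_kr e (by omega)
    have hVpos := pr_pos hp hVne
    have hTU := pr_mono hp (Finset.union_subset hU hV)
    rw [pr_union p hd] at hTU
    have hkT := kr_mono e (Finset.union_subset hU hV)
    rw [kr_union e hd] at hkT
    rcases U.eq_empty_or_nonempty with rfl | hUne
    · have : pr p (∅ : Finset ι) = 0 := by simp [pr]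
      linarith
    have hUpos := kr_pos e hUne
    -- s ≥ 2
    obtain ⟨r, rfl⟩ : ∃ r, s = r + 2 := by
      rcases s with _ | _ | s
      · simp at hT; omega
      · simp at hT; omega
      · exact ⟨s, rfl⟩
    have e1 : 2 ^ (r + 2) = 4 * 2 ^ r := by ring
    have e2 : 2 ^ (r + 1) = 2 * 2 ^ r := by ring
    by_cases c1 : 2 ^ (r + 1) ≤ kr e V
    · have := lt_two_mul hp hsm hT (j := r + 1) (by omega) hU hUne (by omega) c1
        (exp_le e (by show kr e V < 2 ^ (r + 2); omega))
      linarith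
    push Not at c1
    by_cases c2 : kr e U + kr e V ≤ 2 ^ (r + 1)
    · obtain ⟨T', h1, h2, h3⟩ := exists_ext e (j := r + 1) (Finset.union_subset hU hV)
        (hUne.mono Finset.subset_union_left) (by rw [kr_union e hd]; exact c2) hT (by omega)
      have hss : T' ⊂ T := by
        refine lt_of_le_of_ne h2 ?_
        rintro rfl
        have : 0 < 2 ^ r := by positivity
        omega
      have := (ih T' hss).1 (r + 1) U V h3 (Finset.subset_union_left.trans h1)
        (Finset.subset_union_right.trans h1) hd hlt
      have := pr_mono hp h2
      linarith
    push Not at c2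
    by_cases c3 : kr e U < 2 ^ r
    · have := lt_two_mul hp hsm hT (j := r) (by omega) hU hUne c3 (by omega) (exp_le e c1)
      linarith
    push Not at c3
    obtain ⟨u, hu, huk⟩ := exists_sub_pow e r U c3 (exp_le e (by omega))
    obtain ⟨v, hv, hvk⟩ := exists_sub_pow e r V (by omega) (exp_le e (by omega))
    have hduv : Disjoint u v := Disjoint.mono hu hv hd
    have huv : u ∪ v ⊆ T := Finset.union_subset (hu.trans hU) (hv.trans hV)
    have k1 := kr_sdiff e huv
    have k2 := kr_sdiff e hu
    have k3 := kr_sdiff e hv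
    rw [kr_union e hduv] at k1
    have q1 := pr_sdiff p huv
    have q2 := pr_sdiff p hu
    have q3 := pr_sdiff p hv
    rw [pr_union p hduv] at q1
    obtain ⟨i, rfl⟩ : ∃ i, r = i + 1 := by
      rcases r with _ | r
      · simp at *; omega
      · exact ⟨r, rfl⟩
    have hpow : 0 < 2 ^ (i + 1) := by positivity
    have hss : T \ (u ∪ v) ⊂ T := by
      refine Finset.sdiff_ssubset huv ?_
      exact (nonempty_of_kr e (by omega : 0 < kr e u)).mono Finset.subset_union_left
    obtain ⟨Z, hZ, hZk, hZp⟩ := (ih _ hss).2 i (pr p v) (U \ u) (V \ v)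
      (by have : 2 ^ (i + 2) = 2 * 2 ^ (i + 1) := by ring
          omega)
      (by
        intro x hx
        have := Finset.disjoint_left.1 hd
        have := @hU x
        have := @hv x
        simp only [Finset.mem_sdiff, Finset.mem_union] at *
        tauto)
      (by
        intro x hx
        have : x ∈ U → x ∉ V := fun h => Finset.disjoint_left.1 hd h
        have := @hV x
        have := @hu x
        simp only [Finset.mem_sdiff, Finset.mem_union] at *
        tauto)
      (Disjoint.mono Finset.sdiff_subset Finset.sdiff_subset hd)
      (by omega) (by omega) (pr_nonneg hp _)
      (fun A _ hA => hsm v A _ _ hvk hA (by omega))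
    have hdZ : Disjoint v Z := by
      rw [Finset.disjoint_left]
      intro x hx hxZ
      have := hZ hxZ
      simp [hx] at this
    have hm := hsm (v ∪ Z) u (i + 2) (i + 1) (by rw [kr_union e hdZ, hvk, hZk]; ring) huk (by omega)
    rw [pr_union p hdZ] at hm
    linarith
  · intro s w U V hT hU hV hd hlt hV2 hw hA
    have hVne : V.Nonempty := nonempty_of_kr e (by omega)
    have hVpos := pr_pos hp hVne
    have e1 : 2 ^ (s + 2) = 4 * 2 ^ s := by ring
    have e2 : 2 ^ (s + 1) = 2 * 2 ^ s := by ring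
    have hpow : 0 < 2 ^ s := by positivity
    obtain ⟨Z, hZT, hZk, hZp⟩ : ∃ Z ⊆ T, kr e Z = 2 ^ (s + 1) ∧ 2 * pr p Z ≤ pr p T := by
      obtain ⟨C, hC, hC1, hC2⟩ := exists_half e hV hVne (by omega) hT
      have := pr_sdiff p hC
      rcases le_total (pr p C) (pr p (T \ C)) with h | h
      · exact ⟨C, hC, hC1, by linarith⟩
      · exact ⟨T \ C, Finset.sdiff_subset, hC2, by linarith⟩
    rcases U.eq_empty_or_nonempty with rfl | hUne
    · have : pr p (∅ : Finset ι) = 0 := by simp [pr]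
      exact ⟨Z, hZT, hZk, by linarith⟩
    have hUpos := kr_pos e hUne
    by_cases c2 : kr e U + kr e V ≤ 2 ^ (s + 1)
    · obtain ⟨T', h1, h2, h3⟩ := exists_ext e (j := s + 1) (Finset.union_subset hU hV)
        (hUne.mono Finset.subset_union_left) (by rw [kr_union e hd]; exact c2) hT (by omega)
      have hss : T' ⊂ T := by
        refine lt_of_le_of_ne h2 ?_
        rintro rfl
        omega
      have hi := (ih T' hss).1 (s + 1) U V h3 (Finset.subset_union_left.trans h1)
        (Finset.subset_union_right.trans h1) hd hlt
      obtain ⟨C, hC, hC1, hC2⟩ := exists_half e (Finset.subset_union_left.trans h1) hUne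
        (by omega) h3
      have a1 := hA C (hC.trans h2) hC1
      have a2 := hA (T' \ C) (Finset.sdiff_subset.trans h2) hC2
      have := pr_sdiff p hC
      exact ⟨Z, hZT, hZk, by linarith⟩
    push Not at c2
    by_cases c3 : kr e U < 2 ^ s
    · have h2 := lt_two_mul hp hsm hT (j := s) (by omega) hU hUne c3 (by omega) (exp_le e hV2)
      obtain ⟨A, h3, h4, h5⟩ := exists_ext e hU hUne c3.le hT (by omega)
      have := pr_mono hp h3
      have := hA A h4 h5
      exact ⟨Z, hZT, hZk, by linarith⟩
    push Not at c3
    obtain ⟨u, hu, huk⟩ := exists_sub_pow e s U c3 (exp_le e (by omega))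
    obtain ⟨v, hv, hvk⟩ := exists_sub_pow e s V (by omega) (exp_le e (by omega))
    have hduv : Disjoint u v := Disjoint.mono hu hv hd
    have huv : u ∪ v ⊆ T := Finset.union_subset (hu.trans hU) (hv.trans hV)
    have k1 := kr_sdiff e huv
    have k2 := kr_sdiff e hu
    have k3 := kr_sdiff e hv
    rw [kr_union e hduv] at k1
    have q1 := pr_sdiff p huv
    have q2 := pr_sdiff p hu
    have q3 := pr_sdiff p hv
    rw [pr_union p hduv] at q1
    obtain ⟨i, rfl⟩ : ∃ i, s = i + 1 := by
      rcases s with _ | r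
      · simp at *; omega
      · exact ⟨r, rfl⟩
    have hss : T \ (u ∪ v) ⊂ T := by
      refine Finset.sdiff_ssubset huv ?_
      exact (nonempty_of_kr e (by omega : 0 < kr e u)).mono Finset.subset_union_left
    obtain ⟨Z1, hZ1, hZ1k, hZ1p⟩ := (ih _ hss).2 i (pr p v) (U \ u) (V \ v)
      (by have : 2 ^ (i + 2) = 2 * 2 ^ (i + 1) := by ring
          omega)
      (by
        intro x hx
        have := Finset.disjoint_left.1 hd
        have := @hU x
        have := @hv x
        simp only [Finset.mem_sdiff, Finset.mem_union] at *
        tauto)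
      (by
        intro x hx
        have : x ∈ U → x ∉ V := fun h => Finset.disjoint_left.1 hd h
        have := @hV x
        have := @hu x
        simp only [Finset.mem_sdiff, Finset.mem_union] at *
        tauto)
      (Disjoint.mono Finset.sdiff_subset Finset.sdiff_subset hd)
      (by omega) (by omega) (pr_nonneg hp _)
      (fun A _ hA => hsm v A _ _ hvk hA (by omega))
    have hdZ : Disjoint v Z1 := by
      rw [Finset.disjoint_left]
      intro x hx hxZ
      have := hZ1 hxZ
      simp [hx] at this
    have hm := hA u (hu.trans hU) huk
    refine ⟨v ∪ Z1, Finset.union_subset (hv.trans hV) (hZ1.trans Finset.sdiff_subset),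
      by rw [kr_union e hdZ, hvk, hZ1k]; ring, ?_⟩
    rw [pr_union p hdZ]
    linarith

end HuffAdv


/-- The competitive advantage of any prefix code C over a Huffman code H
(complete, strongly monotone, expected-length optimal) is strictly less
than 1/3. -/
theorem advantage_lt_one_third (n : ℕ) (p : Fin n → ℝ)
    (hpos : ∀ i, 0 < p i) (hsum : ∑ i, p i = 1)
    (lH : Fin n → ℕ)
    (hcomplete : ∑ i, ((1:ℝ)/2) ^ (lH i) = 1)
    (hsm : ∀ (X Y : Finset (Fin n)) (a b : ℕ),
      (∑ x ∈ X, ((1:ℝ)/2) ^ (lH x)) = ((1:ℝ)/2) ^ a →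
      (∑ x ∈ Y, ((1:ℝ)/2) ^ (lH x)) = ((1:ℝ)/2) ^ b →
      a < b → ∑ x ∈ Y, p x ≤ ∑ x ∈ X, p x)
    (hopt : ∀ l' : Fin n → ℕ, (∑ i, ((1:ℝ)/2) ^ (l' i) ≤ 1) →
      ∑ i, p i * lH i ≤ ∑ i, p i * l' i)
    (lC : Fin n → ℕ) (hCkraft : ∑ i, ((1:ℝ)/2) ^ (lC i) ≤ 1) :
    (∑ i ∈ Finset.univ.filter (fun i => lC i < lH i), p i)
      - (∑ i ∈ Finset.univ.filter (fun i => lH i < lC i), p i) < 1/3 := by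
  classical
  set W := Finset.univ.filter (fun i => lC i < lH i) with hW
  set L := Finset.univ.filter (fun i => lH i < lC i) with hL
  set D := ∑ i, lH i with hD
  have hlD : ∀ i, lH i ≤ D := fun i =>
    Finset.single_le_sum (f := lH) (fun _ _ => Nat.zero_le _) (Finset.mem_univ i)
  set e : Fin n → ℕ := fun i => D - lH i with he
  have h2 : ∀ m, m ≤ D → ((1:ℝ)/2) ^ m * 2 ^ D = 2 ^ (D - m) := by
    intro m hm
    obtain ⟨k, hk⟩ := Nat.exists_eq_add_of_le hm
    rw [hk, Nat.add_sub_cancel_left, pow_add, ← mul_assoc, ← mul_pow]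
    norm_num
  have hD0 : (0:ℝ) < 2 ^ D := by positivity
  have hK : ∀ A : Finset (Fin n),
      (∑ x ∈ A, ((1:ℝ)/2) ^ (lH x)) * 2 ^ D = (HuffAdv.kr e A : ℝ) := by
    intro A
    rw [Finset.sum_mul, HuffAdv.kr]
    push_cast
    exact Finset.sum_congr rfl (fun x _ => h2 _ (hlD x))
  have hT : HuffAdv.kr e Finset.univ = 2 ^ D := by
    have := hK Finset.univ
    rw [hcomplete, one_mul] at this
    exact_mod_cast this.symm
  have hcv : ∀ (A : Finset (Fin n)) (a : ℕ), HuffAdv.kr e A = 2 ^ a →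
      a ≤ D ∧ ∑ x ∈ A, ((1:ℝ)/2) ^ (lH x) = ((1:ℝ)/2) ^ (D - a) := by
    intro A a h
    have hle : a ≤ D := by
      have h1 := HuffAdv.kr_mono e (Finset.subset_univ A)
      rw [h, hT] at h1
      exact (Nat.pow_le_pow_iff_right (by norm_num)).1 h1
    refine ⟨hle, mul_right_cancel₀ hD0.ne' ?_⟩
    rw [hK, h, h2 _ (by omega), Nat.sub_sub_self hle]
    push_cast
    rfl
  have hsm' : HuffAdv.SM e p := by
    intro X Y a b hX hY hab
    obtain ⟨ha, hX'⟩ := hcv X a hX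
    obtain ⟨hb, hY'⟩ := hcv Y b hY
    exact hsm X Y _ _ hX' hY' (by omega)
  have hd : Disjoint W L := by
    rw [Finset.disjoint_left]
    intro x h1 h3
    simp [hW, hL] at h1 h3
    omega
  -- K(W) < K(L) or both are empty
  by_cases hLe : L.Nonempty
  · have hlt : ∑ x ∈ W, ((1:ℝ)/2) ^ (lH x) < ∑ x ∈ L, ((1:ℝ)/2) ^ (lH x) := by
      have h3 : ∑ i, (((1:ℝ)/2) ^ (lH i) + (if lC i < lH i then ((1:ℝ)/2) ^ (lH i) else 0)
          - (if lH i < lC i then ((1:ℝ)/2) ^ (lH i) else 0)) < ∑ i, ((1:ℝ)/2) ^ (lC i) := by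
        obtain ⟨z, hz⟩ := hLe
        have hz' : lH z < lC z := by simpa [hL] using hz
        refine Finset.sum_lt_sum (fun i _ => ?_) ⟨z, Finset.mem_univ z, ?_⟩
        · rcases lt_trichotomy (lC i) (lH i) with h | h | h
          · rw [if_pos h, if_neg (by omega)]
            have h4 : ((1:ℝ)/2) ^ (lH i) ≤ ((1:ℝ)/2) ^ (lC i + 1) :=
              pow_le_pow_of_le_one (by norm_num) (by norm_num) h
            rw [pow_succ] at h4
            linarith
          · simp [h]
          · rw [if_neg (by omega), if_pos h]
            have : (0:ℝ) < ((1:ℝ)/2) ^ (lC i) := by positivity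
            linarith
        · rw [if_neg (by omega), if_pos hz']
          have : (0:ℝ) < ((1:ℝ)/2) ^ (lC z) := by positivity
          linarith
      rw [Finset.sum_sub_distrib, Finset.sum_add_distrib, hcomplete, ← Finset.sum_filter,
        ← Finset.sum_filter] at h3
      linarith
    have hlt' : HuffAdv.kr e W < HuffAdv.kr e L := by
      have := mul_lt_mul_of_pos_right hlt hD0
      rw [hK, hK] at this
      exact_mod_cast this
    have := (HuffAdv.key hpos hsm' Finset.univ).1 D W L hT (Finset.subset_univ _)
      (Finset.subset_univ _) hd hlt'
    simp only [HuffAdv.pr, hsum] at this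
    linarith
  · have hno : ∀ i, lC i ≤ lH i := by
      intro i
      by_contra h
      exact hLe ⟨i, by simp [hL]; omega⟩
    have hWe : W = ∅ := by
      by_contra h
      obtain ⟨z, hz⟩ := Finset.nonempty_iff_ne_empty.2 h
      have hz' : lC z < lH z := by simpa [hW] using hz
      have : ∑ i, ((1:ℝ)/2) ^ (lH i) < ∑ i, ((1:ℝ)/2) ^ (lC i) :=
        Finset.sum_lt_sum
          (fun i _ => pow_le_pow_of_le_one (by norm_num) (by norm_num) (hno i))
          ⟨z, Finset.mem_univ z, pow_lt_pow_right_of_lt_one₀ (by norm_num) (by norm_num) hz'⟩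
      linarith
    rw [hWe, Finset.not_nonempty_iff_eq_empty.1 hLe]
    norm_num
end
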